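/- When f = 0, the second-order pressure-correction DRLM scheme (P-DRLM2) is unconditionally stable in the sense that, for every n = 2, …, N and every τ > 0: (3/2)K(uⁿ⁺¹,pⁿ⁺¹) − (1/2)K(uⁿ,pⁿ) + θ[(3/2)(Qⁿ⁺¹)² − (1/2)(Qⁿ)² − 1] ≤ (3/2)K(uⁿ,pⁿ) − (1/2)K(uⁿ⁻¹,pⁿ⁻¹) + θ[(3/2)(Qⁿ)² − (1/2)(Qⁿ⁻¹)² − 1]. -/

import Mathlib

open MeasureTheory Real
open scoped RealInnerProductSpace

noncomputable section

/-- Euclidean space `ℝ^d`. -/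
abbrev Euc (d : ℕ) := EuclideanSpace ℝ (Fin d)

/-- Partial derivative of a scalar field in the `j`-th coordinate direction. -/
def pder {d : ℕ} (j : Fin d) (f : Euc d → ℝ) (x : Euc d) : ℝ :=
  fderiv ℝ f x (EuclideanSpace.single j 1)

/-- Gradient of a scalar field. -/
def grd {d : ℕ} (f : Euc d → ℝ) (x : Euc d) : Euc d :=
  (WithLp.equiv 2 (Fin d → ℝ)).symm fun j => pder j f x

/-- Laplacian of a scalar field. -/
def lap {d : ℕ} (f : Euc d → ℝ) (x : Euc d) : ℝ :=
  ∑ j, pder j (fun y => pder j f y) x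

/-- Componentwise Laplacian of a vector field. -/
def vlap {d : ℕ} (u : Euc d → Euc d) (x : Euc d) : Euc d :=
  (WithLp.equiv 2 (Fin d → ℝ)).symm fun i => lap (fun y => u y i) x

/-- Divergence of a vector field. -/
def divg {d : ℕ} (u : Euc d → Euc d) (x : Euc d) : ℝ :=
  ∑ j, pder j (fun y => u y j) x

/-- Convection term `(u·∇)v`. -/
def conv {d : ℕ} (u v : Euc d → Euc d) (x : Euc d) : Euc d :=
  (WithLp.equiv 2 (Fin d → ℝ)).symm fun i => ∑ j, u x j * pder j (fun y => v y i) x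

/-- `L²(Ω)` inner product of vector fields. -/
def ipL2 {d : ℕ} (Ω : Set (Euc d)) (u v : Euc d → Euc d) : ℝ :=
  ∫ x in Ω, ⟪u x, v x⟫

/-- Squared `L²(Ω)` norm of a vector field. -/
def nsq {d : ℕ} (Ω : Set (Euc d)) (u : Euc d → Euc d) : ℝ :=
  ∫ x in Ω, ‖u x‖ ^ 2

/-- Squared `L²(Ω)` norm of the gradient of a scalar field. -/
def gnsq {d : ℕ} (Ω : Set (Euc d)) (p : Euc d → ℝ) : ℝ :=
  ∫ x in Ω, ‖grd p x‖ ^ 2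

/-- Squared `L²(Ω)` norm of the gradient of a vector field. -/
def vgnsq {d : ℕ} (Ω : Set (Euc d)) (u : Euc d → Euc d) : ℝ :=
  ∫ x in Ω, ∑ i, ‖grd (fun y => u y i) x‖ ^ 2

/-- `(∇p, v)` in `L²(Ω)`. -/
def ipGrad {d : ℕ} (Ω : Set (Euc d)) (p : Euc d → ℝ) (v : Euc d → Euc d) : ℝ :=
  ∫ x in Ω, ⟪grd p x, v x⟫

/-- `(∇p, ∇q)` in `L²(Ω)`. -/
def ipGG {d : ℕ} (Ω : Set (Euc d)) (p q : Euc d → ℝ) : ℝ :=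
  ∫ x in Ω, ⟪grd p x, grd q x⟫

/-- `(∇u, ∇v)` in `L²(Ω)` for vector fields. -/
def ipVG {d : ℕ} (Ω : Set (Euc d)) (u v : Euc d → Euc d) : ℝ :=
  ∫ x in Ω, ∑ i, ⟪grd (fun y => u y i) x, grd (fun y => v y i) x⟫

/-- Trilinear form `b(u,v,w) = ∫_Ω ((u·∇)v)·w`. -/
def triB {d : ℕ} (Ω : Set (Euc d)) (u v w : Euc d → Euc d) : ℝ :=
  ∫ x in Ω, ⟪conv u v x, w x⟫

/-- Discrete energy `K(u,p) = ½(‖u‖² + τ²‖∇p‖²)`. -/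
def Ke {d : ℕ} (Ω : Set (Euc d)) (τ : ℝ) (u : Euc d → Euc d) (p : Euc d → ℝ) : ℝ :=
  (1/2) * (nsq Ω u + τ^2 * gnsq Ω p)

/-- Squared `H¹(Ω)` norm of a vector field. -/
def h1sq {d : ℕ} (Ω : Set (Euc d)) (u : Euc d → Euc d) : ℝ :=
  nsq Ω u + vgnsq Ω u

/-- Squared `H²(Ω)` norm of a vector field. -/
def h2sq {d : ℕ} (Ω : Set (Euc d)) (u : Euc d → Euc d) : ℝ :=
  h1sq Ω u + ∫ x in Ω, ∑ i, ∑ j, ∑ k,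
    (pder k (fun y => pder j (fun z => u z i) y) x) ^ 2

/-- `H⁻¹(Ω)` norm, defined by duality against `H¹₀(Ω)` vector fields. -/
def negNorm {d : ℕ} (Ω : Set (Euc d)) (f : Euc d → Euc d) : ℝ :=
  sSup {r : ℝ | ∃ v : Euc d → Euc d, (∀ x ∈ frontier Ω, v x = 0) ∧
    r = (∫ x in Ω, ⟪f x, v x⟫) / Real.sqrt (vgnsq Ω v)}

/-- One step of the second-order pressure-correction DRLM scheme (P-DRLM2):
from `(uⁿ⁻¹, pⁿ⁻¹, Qⁿ⁻¹)` and `(uⁿ, pⁿ, Qⁿ)` the quadruple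
`(ûⁿ⁺¹, uⁿ⁺¹, pⁿ⁺¹, Qⁿ⁺¹)` satisfies the BDF2 prediction step (with
`ũⁿ⁺¹ = 2uⁿ − uⁿ⁻¹` and no external force), the projection step,
incompressibility (with vanishing normal trace, `nrm` being the outward
normal of `Ω`), and the BDF2 multiplier energy equation. -/
def PDRLM2 {d : ℕ} (Ω : Set (Euc d)) (ν τ θ : ℝ)
    (um u : Euc d → Euc d) (pm p : Euc d → ℝ) (Qm Qn : ℝ)
    (uh u' : Euc d → Euc d) (p' : Euc d → ℝ) (Q' : ℝ)
    (nrm : Euc d → Euc d) : Prop :=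
  (∀ x ∈ Ω, (1/(2*τ)) • ((3:ℝ) • uh x - (4:ℝ) • u x + um x)
      + Q' • conv (fun y => (2:ℝ) • u y - um y) (fun y => (2:ℝ) • u y - um y) x
      + grd p x - ν • vlap uh x = 0) ∧
  (∀ x ∈ frontier Ω, uh x = 0) ∧
  (∀ x ∈ Ω, (1/(2*τ)) • ((3:ℝ) • u' x - (3:ℝ) • uh x)
      + grd (fun y => p' y - p y + ν * divg uh y) x = 0) ∧
  (∀ x ∈ Ω, divg u' x = 0) ∧
  (∀ x ∈ frontier Ω, ⟪u' x, nrm x⟫ = 0) ∧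
  ((3 * Ke Ω τ u' p' - 4 * Ke Ω τ u p + Ke Ω τ um pm) / (2*τ)
      + θ * (3 * Q' ^ 2 - 4 * Qn ^ 2 + Qm ^ 2) / (2*τ)
    = ipL2 Ω (fun x => (1/(2*τ)) • ((3:ℝ) • uh x - (4:ℝ) • u x + um x)) uh
      + (Q' * triB Ω (fun y => (2:ℝ) • u y - um y) (fun y => (2:ℝ) • u y - um y) uh
         + ipGrad Ω p uh))

/-!
Testing the prediction step with `ûⁿ⁺¹` turns the right-hand side of the multiplier equation into
`ν (Δûⁿ⁺¹, ûⁿ⁺¹)`, which is nonpositive because `ûⁿ⁺¹` vanishes on `∂Ω`. The BDF2 difference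
`3a - 4b + c` is twice the difference of `(3a - b)/2` and `(3b - c)/2`, so this is the claim.

The boundary of `Ω` may be arbitrarily irregular, and the extension by zero of a function `w`
vanishing on `∂Ω` is in general not differentiable. Its composition with some `φ` such that
`φ 0 = φ' 0 = 0` is, which gives `∫ φ(w) ∂²w = -∫ φ'(w) (∂w)²` by integration by parts over the
whole space. One then lets an increasing `φ` tend to the identity.
-/

open Filter Topology

section ZeroExtension

variable {𝕜 E F : Type*} [NontriviallyNormedField 𝕜] [NormedAddCommGroup E] [NormedSpace 𝕜 E]
  [NormedAddCommGroup F] [NormedSpace 𝕜 F]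

lemma hasFDerivAt_zero_indicator {f : E → F} {x : E} (hf : HasFDerivAt f (0 : E →L[𝕜] F) x)
    (hfx : f x = 0) (s : Set E) : HasFDerivAt (s.indicator f) (0 : E →L[𝕜] F) x := by
  have hx : s.indicator f x = 0 := Set.indicator_apply_eq_zero.2 fun _ => hfx
  rw [hasFDerivAt_iff_isLittleO] at hf ⊢
  simp only [hfx, hx, sub_zero, zero_apply] at hf ⊢
  exact (Asymptotics.isBigO_of_le _ fun _ => norm_indicator_le_norm_self _ _).trans_isLittleO hf

lemma hasFDerivAt_indicator {s : Set E} {f : E → F} {f' : E → E →L[𝕜] F} {x : E}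
    (hf : HasFDerivAt f (f' x) x) (h : x ∈ frontier s → f x = 0 ∧ f' x = 0) :
    HasFDerivAt (s.indicator f) (s.indicator f' x) x := by
  by_cases hx : x ∈ frontier s
  · obtain ⟨hfx, hf'x⟩ := h hx
    have hind : s.indicator f' x = 0 := Set.indicator_apply_eq_zero.2 fun _ => hf'x
    exact hind ▸ hasFDerivAt_zero_indicator (hf'x ▸ hf) hfx s
  by_cases hxs : x ∈ s
  · have hint : s ∈ 𝓝 x := mem_interior_iff_mem_nhds.1 (by_contra fun hi =>
      hx ⟨subset_closure hxs, hi⟩)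
    rw [Set.indicator_of_mem hxs]
    exact hf.congr_of_eventuallyEq (eventually_of_mem hint fun _ hy => Set.indicator_of_mem hy f)
  · have hext : sᶜ ∈ 𝓝 x := mem_interior_iff_mem_nhds.1 (by_contra fun hi => by
      rw [← frontier_compl] at hx
      exact hx ⟨subset_closure hxs, hi⟩)
    rw [Set.indicator_of_notMem hxs]
    exact (hasFDerivAt_const 0 x).congr_of_eventuallyEq
      (eventually_of_mem hext fun _ hy => Set.indicator_of_notMem hy f)

end ZeroExtension

section DirectionalDerivative

variable {𝕜 E F : Type*} [NontriviallyNormedField 𝕜] [NormedAddCommGroup E] [NormedSpace 𝕜 E]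
  [NormedAddCommGroup F] [NormedSpace 𝕜 F] {f : E → F}

lemma contDiff_fderiv_apply {m n : WithTop ℕ∞} (hmn : m + 1 ≤ n) (hf : ContDiff 𝕜 n f) (v : E) :
    ContDiff 𝕜 m fun x => fderiv 𝕜 f x v :=
  (hf.fderiv_right hmn).clm_apply contDiff_const

lemma continuous_fderiv_apply (hf : ContDiff 𝕜 1 f) (v : E) :
    Continuous fun x => fderiv 𝕜 f x v :=
  (contDiff_fderiv_apply (zero_add 1).le hf v).continuous

end DirectionalDerivative

lemma integrableOn_of_continuous_of_isBounded {X F : Type*} [PseudoMetricSpace X] [ProperSpace X]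
    [MeasurableSpace X] [OpensMeasurableSpace X] {μ : Measure X} [IsFiniteMeasureOnCompacts μ]
    [NormedAddCommGroup F] {s : Set X} (hs : Bornology.IsBounded s) {f : X → F}
    (hf : Continuous f) : IntegrableOn f s μ :=
  (hf.continuousOn.integrableOn_compact' hs.isCompact_closure measurableSet_closure).mono_set
    subset_closure

/-- The rational function `t³ / (t² + ε)`, an increasing approximation of the identity as `ε → 0⁺`
that vanishes to second order at `0`. -/
def flattenedId (ε t : ℝ) : ℝ := t ^ 3 / (t ^ 2 + ε)

section FlattenedId

variable {ε : ℝ}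

lemma contDiff_flattenedId {n : WithTop ℕ∞} (hε : 0 < ε) : ContDiff ℝ n (flattenedId ε) :=
  (contDiff_id.pow 3).div ((contDiff_id.pow 2).add contDiff_const) fun t =>
    (add_pos_of_nonneg_of_pos (sq_nonneg t) hε).ne'

lemma deriv_flattenedId (hε : 0 < ε) (t : ℝ) :
    deriv (flattenedId ε) t = t ^ 2 * (t ^ 2 + 3 * ε) / (t ^ 2 + ε) ^ 2 := by
  have h := (hasDerivAt_pow 3 t).div ((hasDerivAt_pow 2 t).add_const ε)
    (add_pos_of_nonneg_of_pos (sq_nonneg t) hε).ne'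
  refine (show HasDerivAt (flattenedId ε) _ t from h).deriv.trans ?_
  congr 1
  push_cast
  ring

lemma monotone_flattenedId (hε : 0 < ε) : Monotone (flattenedId ε) :=
  monotone_of_deriv_nonneg ((contDiff_flattenedId hε).differentiable one_ne_zero) fun t => by
    rw [deriv_flattenedId hε]
    positivity

lemma abs_flattenedId_le (hε : 0 < ε) (t : ℝ) : |flattenedId ε t| ≤ |t| := by
  have hpos : 0 < t ^ 2 + ε := by positivity
  rw [flattenedId, abs_div, abs_of_pos hpos, div_le_iff₀ hpos, abs_pow, pow_succ', sq_abs]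
  gcongr
  exact le_add_of_nonneg_right hε.le

lemma tendsto_flattenedId (t : ℝ) : Tendsto (flattenedId · t) (𝓝 0) (𝓝 t) := by
  rcases eq_or_ne t 0 with rfl | ht
  · simp [flattenedId]
  · have hcont : ContinuousAt (flattenedId · t) 0 :=
      continuousAt_const.div (continuousAt_const.add continuousAt_id) (by simpa using ht)
    have hzero : flattenedId 0 t = t := by
      rw [flattenedId]
      field_simp
      simp
    simpa only [hzero] using hcont.tendsto

end FlattenedId

section IntegrationByParts

variable {E : Type*} [NormedAddCommGroup E] [NormedSpace ℝ E] [FiniteDimensional ℝ E]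
  [MeasurableSpace E] [BorelSpace E] {μ : Measure E} [μ.IsAddHaarMeasure] {Ω : Set E}

lemma setIntegral_mul_fderiv_eq_neg_fderiv_mul (hΩ : MeasurableSet Ω)
    (hb : Bornology.IsBounded Ω) {f g : E → ℝ} (hf : ContDiff ℝ 1 f) (hg : ContDiff ℝ 1 g)
    (hf₀ : ∀ x ∈ frontier Ω, f x = 0 ∧ fderiv ℝ f x = 0) (v : E) :
    ∫ x in Ω, f x * fderiv ℝ g x v ∂μ = -∫ x in Ω, fderiv ℝ f x v * g x ∂μ := by
  have : ProperSpace E := FiniteDimensional.proper ℝ E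
  have hder (x : E) : HasFDerivAt (Ω.indicator f) (Ω.indicator (fderiv ℝ f) x) x :=
    hasFDerivAt_indicator (hf.differentiable one_ne_zero x).hasFDerivAt (hf₀ x)
  have hmul (h : E → ℝ) : (fun x => Ω.indicator f x * h x) = Ω.indicator fun x => f x * h x :=
    funext fun x => by by_cases hx : x ∈ Ω <;> simp [hx]
  have hder_mul : (fun x => fderiv ℝ (Ω.indicator f) x v * g x) =
      Ω.indicator fun x => fderiv ℝ f x v * g x :=
    funext fun x => by by_cases hx : x ∈ Ω <;> simp [(hder x).fderiv, hx]
  have hint {h : E → ℝ} (hh : Continuous h) : Integrable (Ω.indicator h) μ :=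
    (integrableOn_of_continuous_of_isBounded hb hh).integrable_indicator hΩ
  rw [← integral_indicator hΩ, ← integral_indicator hΩ, ← hmul, ← hder_mul]
  refine integral_mul_fderiv_eq_neg_fderiv_mul_of_integrable ?_ ?_ ?_
    (fun x _ => (hder x).differentiableAt) fun x _ => hg.differentiable one_ne_zero x
  · exact hder_mul ▸ hint ((continuous_fderiv_apply hf v).mul hg.continuous)
  · exact hmul _ ▸ hint (hf.continuous.mul (continuous_fderiv_apply hg v))
  · exact hmul _ ▸ hint (hf.continuous.mul hg.continuous)

lemma setIntegral_comp_mul_fderiv_fderiv_nonpos (hΩ : MeasurableSet Ω)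
    (hb : Bornology.IsBounded Ω) {φ : ℝ → ℝ} (hφ : ContDiff ℝ 1 φ) (hφm : Monotone φ)
    (hφ₀ : φ 0 = 0) (hφ₀' : deriv φ 0 = 0) {w : E → ℝ} (hw : ContDiff ℝ 2 w)
    (hw₀ : ∀ x ∈ frontier Ω, w x = 0) (v : E) :
    ∫ x in Ω, φ (w x) * fderiv ℝ (fun y => fderiv ℝ w y v) x v ∂μ ≤ 0 := by
  have hchain (x : E) : fderiv ℝ (φ ∘ w) x = deriv φ (w x) • fderiv ℝ w x :=
    ((hφ.differentiable one_ne_zero (w x)).hasDerivAt.comp_hasFDerivAt x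
      (hw.differentiable two_ne_zero x).hasFDerivAt).fderiv
  have hparts := setIntegral_mul_fderiv_eq_neg_fderiv_mul (μ := μ) hΩ hb
    (hφ.comp (hw.of_le one_le_two)) (contDiff_fderiv_apply one_add_one_eq_two.le hw v)
    (fun x hx => by simp [hchain, hw₀ x hx, hφ₀, hφ₀']) v
  refine hparts.trans_le (neg_nonpos.2 (integral_nonneg fun x => ?_))
  have hsq : fderiv ℝ (φ ∘ w) x v * fderiv ℝ w x v = deriv φ (w x) * fderiv ℝ w x v ^ 2 := by
    rw [hchain, smul_apply, smul_eq_mul]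
    ring
  exact hsq ▸ mul_nonneg hφm.deriv_nonneg (sq_nonneg _)

lemma setIntegral_mul_fderiv_fderiv_nonpos (hΩ : MeasurableSet Ω)
    (hb : Bornology.IsBounded Ω) {w : E → ℝ} (hw : ContDiff ℝ 2 w)
    (hw₀ : ∀ x ∈ frontier Ω, w x = 0) (v : E) :
    ∫ x in Ω, w x * fderiv ℝ (fun y => fderiv ℝ w y v) x v ∂μ ≤ 0 := by
  have : ProperSpace E := FiniteDimensional.proper ℝ E
  set w'' := fun x => fderiv ℝ (fun y => fderiv ℝ w y v) x v
  have hw'' : Continuous w'' :=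
    continuous_fderiv_apply (contDiff_fderiv_apply one_add_one_eq_two.le hw v) v
  have hlim : Tendsto (fun ε => ∫ x in Ω, flattenedId ε (w x) * w'' x ∂μ) (𝓝[>] 0)
      (𝓝 (∫ x in Ω, w x * w'' x ∂μ)) := by
    refine tendsto_integral_filter_of_dominated_convergence (fun x => ‖w x * w'' x‖) ?_ ?_
      (integrableOn_of_continuous_of_isBounded hb (hw.continuous.mul hw'')).norm ?_
    · filter_upwards [self_mem_nhdsWithin] with ε hε
      exact (((contDiff_flattenedId (n := 0) hε).continuous.comp hw.continuous).mul
        hw'').aestronglyMeasurable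
    · filter_upwards [self_mem_nhdsWithin] with ε hε
      refine ae_of_all _ fun x => ?_
      rw [norm_mul, norm_mul]
      exact mul_le_mul_of_nonneg_right (abs_flattenedId_le hε (w x)) (norm_nonneg _)
    · exact ae_of_all _ fun x =>
        ((tendsto_flattenedId (w x)).mono_left nhdsWithin_le_nhds).mul_const _
  refine le_of_tendsto hlim (eventually_nhdsWithin_of_forall fun ε hε => ?_)
  exact setIntegral_comp_mul_fderiv_fderiv_nonpos hΩ hb (contDiff_flattenedId hε)
    (monotone_flattenedId hε) (by simp [flattenedId]) (by simp [deriv_flattenedId hε]) hw hw₀ v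

end IntegrationByParts

section Scheme

variable {d : ℕ} {Ω : Set (Euc d)}

lemma continuous_pder {f : Euc d → ℝ} (hf : ContDiff ℝ 1 f) (j : Fin d) : Continuous (pder j f) :=
  continuous_fderiv_apply hf _

lemma continuous_grd {f : Euc d → ℝ} (hf : ContDiff ℝ 1 f) : Continuous (grd f) :=
  (PiLp.continuous_toLp 2 _).comp <| continuous_pi (continuous_pder hf)

lemma continuous_conv {u v : Euc d → Euc d} (hu : Continuous u) (hv : ContDiff ℝ 1 v) :
    Continuous (conv u v) :=
  (PiLp.continuous_toLp 2 _).comp <| continuous_pi fun i => continuous_finsetSum _ fun j _ =>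
    ((PiLp.continuous_apply 2 _ j).comp hu).mul (continuous_pder (contDiff_euclidean.1 hv i) j)

lemma inner_vlap_eq_sum (u v : Euc d → Euc d) (x : Euc d) :
    ⟪vlap u x, v x⟫ = ∑ i, ∑ j, v x i * pder j (pder j fun y => u y i) x := by
  simp [PiLp.inner_apply, vlap, lap, Finset.mul_sum]

lemma setIntegral_inner_vlap_nonpos (hΩ : MeasurableSet Ω) (hb : Bornology.IsBounded Ω)
    {u : Euc d → Euc d} (hu : ContDiff ℝ 2 u) (hu₀ : ∀ x ∈ frontier Ω, u x = 0) :
    ∫ x in Ω, ⟪vlap u x, u x⟫ ≤ 0 := by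
  have hcomp := contDiff_euclidean.1 hu
  have hint (i j : Fin d) : IntegrableOn (fun x => u x i * pder j (pder j fun y => u y i) x) Ω :=
    integrableOn_of_continuous_of_isBounded hb <| (hcomp i).continuous.mul
      (continuous_pder (contDiff_fderiv_apply one_add_one_eq_two.le (hcomp i) _) j)
  simp only [inner_vlap_eq_sum]
  rw [integral_finsetSum _ fun i _ => integrable_finsetSum _ fun j _ => hint i j]
  refine Finset.sum_nonpos fun i _ => ?_
  rw [integral_finsetSum _ fun j _ => hint i j]
  exact Finset.sum_nonpos fun j _ => setIntegral_mul_fderiv_fderiv_nonpos hΩ hb (hcomp i)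
    (fun x hx => by simp [hu₀ x hx]) (EuclideanSpace.single j 1)

variable {ν τ θ : ℝ} {um u uh u' nrm : Euc d → Euc d} {pm p p' : Euc d → ℝ} {Qm Q Q' : ℝ}

namespace PDRLM2

lemma energy_rate_eq_viscous_work (hΩ : MeasurableSet Ω) (hb : Bornology.IsBounded Ω)
    (hum : ContDiff ℝ 1 um) (hu : ContDiff ℝ 1 u) (hp : ContDiff ℝ 1 p) (huh : Continuous uh)
    (h : PDRLM2 Ω ν τ θ um u pm p Qm Q uh u' p' Q' nrm) :
    (3 * Ke Ω τ u' p' - 4 * Ke Ω τ u p + Ke Ω τ um pm) / (2 * τ)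
        + θ * (3 * Q' ^ 2 - 4 * Q ^ 2 + Qm ^ 2) / (2 * τ)
      = ν * ∫ x in Ω, ⟪vlap uh x, uh x⟫ := by
  obtain ⟨hpred, -, -, -, -, henergy⟩ := h
  have hum_cont := hum.continuous
  have hu_cont := hu.continuous
  have hext : ContDiff ℝ 1 fun y => (2 : ℝ) • u y - um y := (hu.const_smul 2).sub hum
  have hconv := continuous_conv hext.continuous hext
  have hgrd := continuous_grd hp
  rw [henergy, ipL2, triB, ipGrad, ← integral_const_mul, ← integral_const_mul, ← integral_add,
    ← integral_add]
  · refine setIntegral_congr_fun hΩ fun x hx => ?_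
    simp only [← real_inner_smul_left, ← inner_add_left, ← add_assoc]
    rw [sub_eq_zero.1 (hpred x hx)]
  all_goals exact integrableOn_of_continuous_of_isBounded hb (by fun_prop)

lemma energy_rate_nonpos (hΩ : MeasurableSet Ω) (hb : Bornology.IsBounded Ω) (hν : 0 ≤ ν)
    (hum : ContDiff ℝ 1 um) (hu : ContDiff ℝ 1 u) (hp : ContDiff ℝ 1 p) (huh : ContDiff ℝ 2 uh)
    (h : PDRLM2 Ω ν τ θ um u pm p Qm Q uh u' p' Q' nrm) :
    (3 * Ke Ω τ u' p' - 4 * Ke Ω τ u p + Ke Ω τ um pm) / (2 * τ)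
        + θ * (3 * Q' ^ 2 - 4 * Q ^ 2 + Qm ^ 2) / (2 * τ) ≤ 0 :=
  (h.energy_rate_eq_viscous_work hΩ hb hum hu hp huh.continuous).trans_le <|
    mul_nonpos_of_nonneg_of_nonpos hν (setIntegral_inner_vlap_nonpos hΩ hb huh h.2.1)

end PDRLM2

theorem pdrlm2_unconditional_energy_stability_general (hΩ : MeasurableSet Ω)
    (hb : Bornology.IsBounded Ω) (hν : 0 ≤ ν) (hτ : 0 < τ)
    (hum : ContDiff ℝ 1 um) (hu : ContDiff ℝ 1 u) (hp : ContDiff ℝ 1 p) (huh : ContDiff ℝ 2 uh)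
    (h : PDRLM2 Ω ν τ θ um u pm p Qm Q uh u' p' Q' nrm) :
    (3/2) * Ke Ω τ u' p' - (1/2) * Ke Ω τ u p + θ * ((3/2) * Q' ^ 2 - (1/2) * Q ^ 2 - 1)
      ≤ (3/2) * Ke Ω τ u p - (1/2) * Ke Ω τ um pm + θ * ((3/2) * Q ^ 2 - (1/2) * Qm ^ 2 - 1) := by
  have hrate := h.energy_rate_nonpos hΩ hb hν hum hu hp huh
  rw [← add_div] at hrate
  have hbdf2 := (div_le_iff₀ (mul_pos two_pos hτ)).1 hrate
  linarith

end Scheme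

/-- with `f = 0`, the second-order pressure-correction DRLM scheme
(P-DRLM2) is unconditionally stable. -/
theorem pdrlm2_unconditional_energy_stability
    {d : ℕ} (hd : d = 2 ∨ d = 3)
    (Ω : Set (Euc d)) (hΩo : IsOpen Ω) (hΩb : Bornology.IsBounded Ω) (hΩne : Ω.Nonempty)
    (ν : ℝ) (hν : ν ∈ Set.Ioo (0:ℝ) 1)
    (T : ℝ) (hT : 0 < T) (N : ℕ) (hN : 0 < N) (τ : ℝ) (hτ : τ = T / N) (hτpos : 0 < τ)
    (θ : ℝ) (hθ : 0 < θ)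
    (U Uh : ℕ → Euc d → Euc d) (P : ℕ → Euc d → ℝ) (Q : ℕ → ℝ)
    (nrm : Euc d → Euc d)
    -- smoothness of the discrete fields
    (hsU : ∀ n, ContDiff ℝ (⊤ : ℕ∞) (U n)) (hsUh : ∀ n, ContDiff ℝ (⊤ : ℕ∞) (Uh n))
    (hsP : ∀ n, ContDiff ℝ (⊤ : ℕ∞) (P n))
    -- the P-DRLM2 scheme (in the absence of the external force)
    (hscheme : ∀ n, 1 ≤ n → n < N → PDRLM2 Ω ν τ θ
      (U (n-1)) (U n) (P (n-1)) (P n) (Q (n-1)) (Q n)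
      (Uh (n+1)) (U (n+1)) (P (n+1)) (Q (n+1)) nrm) :
    ∀ n, 2 ≤ n → n < N →
      (3/2) * Ke Ω τ (U (n+1)) (P (n+1)) - (1/2) * Ke Ω τ (U n) (P n)
          + θ * ((3/2) * (Q (n+1)) ^ 2 - (1/2) * (Q n) ^ 2 - 1)
        ≤ (3/2) * Ke Ω τ (U n) (P n) - (1/2) * Ke Ω τ (U (n-1)) (P (n-1))
          + θ * ((3/2) * (Q n) ^ 2 - (1/2) * (Q (n-1)) ^ 2 - 1) := by
  intro n _ hnN
  exact pdrlm2_unconditional_energy_stability_general hΩo.measurableSet hΩb hν.1.le hτpos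
    (contDiff_infty.1 (hsU _) 1) (contDiff_infty.1 (hsU _) 1) (contDiff_infty.1 (hsP _) 1)
    (contDiff_infty.1 (hsUh _) 2) (hscheme n (by omega) hnN)
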